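/- Let m ≥ 2 be an integer and, for k = 2, …, m, set s_k = 2m/k. Then for every positive integer n and every m-linear form T : ℓ_m^n × ⋯ × ℓ_m^n → 𝕂, one has sup_{1 ≤ j_1 ≤ n} ( Σ_{j_2=1}^n ( ⋯ ( Σ_{j_m=1}^n |T(e_{j_1}, …, e_{j_m})|^{s_m} )^{s_{m−1}/s_m} ⋯ )^{s_2/s_3} )^{1/s_2} ≤ 2^{(m−1)/2} ‖T‖. -/

import Mathlib

open scoped ENNReal

/-- The iterated mixed-norm expression
`( Σ_{j_1} ( ⋯ ( Σ_{j_m} f(j_1,…,j_m)^{s_m} )^{s_{m−1}/s_m} ⋯ )^{s_1/s_2} )^{1/s_1}`,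
defined recursively: for exponents `s : Fin m → ℝ` and `f : (Fin m → Fin n) → ℝ`. -/
noncomputable def mixedNorm (n : ℕ) : (m : ℕ) → (Fin m → ℝ) → ((Fin m → Fin n) → ℝ) → ℝ
  | 0, _, f => f Fin.elim0
  | (m + 1), s, f =>
      (∑ j : Fin n,
        (mixedNorm n m (fun i => s i.succ) (fun js => f (Fin.cons j js))) ^ (s 0)) ^ (1 / s 0)

open scoped BigOperators

namespace CriticalHL

/-- The sign `±1` encoded by a Boolean. -/
def sgn (b : Bool) : ℝ := if b then 1 else -1

lemma sgn_not (b : Bool) : sgn (!b) = -sgn b := by cases b <;> simp [sgn]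

lemma abs_sgn (b : Bool) : |sgn b| = 1 := by cases b <;> simp [sgn]

/-- Flip the `i`-th coordinate of a point of the discrete cube. -/
def flip {n : ℕ} (i : Fin n) (e : Fin n → Bool) : Fin n → Bool := Function.update e i (!e i)

lemma flip_flip {n : ℕ} (i : Fin n) (e : Fin n → Bool) : flip i (flip i e) = e := by
  simp [flip]

lemma flip_zero_cons {n : ℕ} (b : Bool) (e : Fin n → Bool) :
    flip 0 (Fin.cons b e : Fin (n + 1) → Bool) = Fin.cons (!b) e := by
  simp [flip]

lemma flip_succ_cons {n : ℕ} (i : Fin n) (b : Bool) (e : Fin n → Bool) :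
    flip i.succ (Fin.cons b e : Fin (n + 1) → Bool) = Fin.cons b (flip i e) := by
  simp [flip, Fin.cons_update]

lemma expect_cons {n : ℕ} {α : Type*} [Fintype α] (f : (Fin (n + 1) → α) → ℝ) :
    𝔼 e, f e = 𝔼 a, 𝔼 e : Fin n → α, f (Fin.cons a e) := by
  have h := Finset.expect_product' (Finset.univ : Finset α) (Finset.univ : Finset (Fin n → α))
    (fun a e => f (Fin.cons a e))
  rw [← h, Finset.univ_product_univ]
  exact (Fintype.expect_equiv (Fin.consEquiv fun _ => α) _ _ fun _ => rfl).symm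

lemma expect_bool (f : Bool → ℝ) : 𝔼 b, f b = (f true + f false) / 2 := by
  rw [Fintype.expect_eq_sum_div_card]
  simp

lemma expect_cube_succ {n : ℕ} (f : (Fin (n + 1) → Bool) → ℝ) :
    𝔼 e, f e = (𝔼 e : Fin n → Bool, f (Fin.cons true e)
      + 𝔼 e : Fin n → Bool, f (Fin.cons false e)) / 2 := by
  rw [expect_cons, expect_bool]

lemma sq_expect_le {Ω : Type*} [Fintype Ω] [Nonempty Ω] (f : Ω → ℝ) :
    (𝔼 x, f x) ^ 2 ≤ 𝔼 x, f x ^ 2 := by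
  simpa using Finset.expect_mul_sq_le_sq_mul_sq (Finset.univ : Finset Ω) f (fun _ => 1)

/-- The Dirichlet form of the discrete cube. -/
noncomputable def dirichlet {n : ℕ} (f : (Fin n → Bool) → ℝ) : ℝ :=
  ∑ i, 𝔼 e, (f e - f (flip i e)) ^ 2 / 4

lemma dirichlet_succ {n : ℕ} (f : (Fin (n + 1) → Bool) → ℝ) :
    dirichlet f = dirichlet (fun e => (f (Fin.cons true e) + f (Fin.cons false e)) / 2)
      + dirichlet (fun e => (f (Fin.cons true e) - f (Fin.cons false e)) / 2)
      + 𝔼 e : Fin n → Bool, ((f (Fin.cons true e) - f (Fin.cons false e)) / 2) ^ 2 := by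
  unfold dirichlet
  rw [Fin.sum_univ_succ, add_comm, ← Finset.sum_add_distrib]
  congr 1
  · refine Finset.sum_congr rfl fun i _ => ?_
    rw [expect_cube_succ, ← Finset.expect_add_distrib, ← Finset.expect_add_distrib,
      Finset.expect_div]
    refine Finset.expect_congr rfl fun e _ => ?_
    simp only [flip_succ_cons]
    ring
  · rw [expect_cube_succ, ← Finset.expect_add_distrib, Finset.expect_div]
    refine Finset.expect_congr rfl fun e _ => ?_
    simp only [flip_zero_cons, Bool.not_true, Bool.not_false]
    ring

lemma expect_sq_succ {n : ℕ} (f : (Fin (n + 1) → Bool) → ℝ) :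
    𝔼 e, f e ^ 2 = 𝔼 e : Fin n → Bool, ((f (Fin.cons true e) + f (Fin.cons false e)) / 2) ^ 2
      + 𝔼 e : Fin n → Bool, ((f (Fin.cons true e) - f (Fin.cons false e)) / 2) ^ 2 := by
  rw [expect_cube_succ, ← Finset.expect_add_distrib, ← Finset.expect_add_distrib,
    Finset.expect_div]
  refine Finset.expect_congr rfl fun e _ => ?_
  ring

lemma expect_succ {n : ℕ} (f : (Fin (n + 1) → Bool) → ℝ) :
    𝔼 e, f e = 𝔼 e : Fin n → Bool, ((f (Fin.cons true e) + f (Fin.cons false e)) / 2) := by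
  rw [expect_cube_succ, ← Finset.expect_add_distrib, Finset.expect_div]

/-- The Poincaré inequality on the discrete cube. -/
lemma poincare : ∀ {n : ℕ} (f : (Fin n → Bool) → ℝ),
    𝔼 e, f e ^ 2 - (𝔼 e, f e) ^ 2 ≤ dirichlet f
  | 0, f => by simp [dirichlet]
  | n + 1, f => by
    have h1 := poincare fun e => (f (Fin.cons true e) + f (Fin.cons false e)) / 2
    have h2 : 0 ≤ dirichlet fun e => (f (Fin.cons true e) - f (Fin.cons false e)) / 2 :=
      Finset.sum_nonneg fun i _ => Finset.expect_nonneg fun e _ => by positivity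
    rw [dirichlet_succ, expect_sq_succ, expect_succ f]
    linarith

/-- A Poincaré inequality with a doubled constant, up to the degree-one Walsh coefficients. -/
lemma poincare_two : ∀ {n : ℕ} (f : (Fin n → Bool) → ℝ),
    2 * (𝔼 e, f e ^ 2 - (𝔼 e, f e) ^ 2) - ∑ i, (𝔼 e, f e * sgn (e i)) ^ 2 ≤ dirichlet f
  | 0, f => by simp [dirichlet]
  | n + 1, f => by
    have h1 := poincare_two fun e => (f (Fin.cons true e) + f (Fin.cons false e)) / 2
    have h2 := poincare fun e => (f (Fin.cons true e) - f (Fin.cons false e)) / 2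
    have h3 : 𝔼 e, f e * sgn (e 0)
        = 𝔼 e : Fin n → Bool, (f (Fin.cons true e) - f (Fin.cons false e)) / 2 := by
      rw [expect_succ]
      refine Finset.expect_congr rfl fun e _ => ?_
      simp [sgn]; ring
    have h4 (i : Fin n) : 𝔼 e, f e * sgn (e i.succ)
        = 𝔼 e : Fin n → Bool, (f (Fin.cons true e) + f (Fin.cons false e)) / 2 * sgn (e i) := by
      rw [expect_succ]
      refine Finset.expect_congr rfl fun e _ => ?_
      simp; ring
    rw [dirichlet_succ, expect_sq_succ, expect_succ f, Fin.sum_univ_succ, h3]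
    simp only [h4]
    linarith

lemma expect_flip {n : ℕ} (i : Fin n) (f : (Fin n → Bool) → ℝ) :
    𝔼 e, f (flip i e) = 𝔼 e, f e :=
  Fintype.expect_equiv (Function.Involutive.toPerm (flip i) (flip_flip i)) _ _ fun _ => rfl

lemma expect_not {n : ℕ} (f : (Fin n → Bool) → ℝ) :
    𝔼 e : Fin n → Bool, f (fun i => !e i) = 𝔼 e, f e :=
  Fintype.expect_equiv (Function.Involutive.toPerm (fun e : Fin n → Bool => fun i => !e i)
    (fun e => by simp)) _ _ fun _ => rfl

lemma sum_sgn_flip {E : Type*} [NormedAddCommGroup E] [NormedSpace ℝ E] {n : ℕ} (x : Fin n → E)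
    (e : Fin n → Bool) (i : Fin n) :
    ∑ k, sgn (flip i e k) • x k = ∑ k, sgn (e k) • x k - (2 : ℝ) • (sgn (e i) • x i) := by
  rw [eq_sub_iff_add_eq, ← Finset.add_sum_erase _ _ (Finset.mem_univ i),
    ← Finset.add_sum_erase (Finset.univ : Finset (Fin n)) (fun k => sgn (e k) • x k)
      (Finset.mem_univ i)]
  have : ∑ k ∈ Finset.univ.erase i, sgn (flip i e k) • x k
      = ∑ k ∈ Finset.univ.erase i, sgn (e k) • x k :=
    Finset.sum_congr rfl fun k hk => by
      rw [flip, Function.update_of_ne (Finset.ne_of_mem_erase hk)]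
  rw [this]
  simp only [flip, Function.update_self, sgn_not]
  module

/-- The Kahane–Khinchine inequality with constant `√2`, by the argument of Latała and
Oleszkiewicz. -/
lemma expect_sq_norm_le {E : Type*} [NormedAddCommGroup E] [NormedSpace ℝ E] {n : ℕ}
    (x : Fin n → E) :
    𝔼 e : Fin n → Bool, ‖∑ k, sgn (e k) • x k‖ ^ 2
      ≤ 2 * (𝔼 e : Fin n → Bool, ‖∑ k, sgn (e k) • x k‖) ^ 2 := by
  set f : (Fin n → Bool) → ℝ := fun e => ‖∑ k, sgn (e k) • x k‖ with hf
  have hodd (i : Fin n) : 𝔼 e, f e * sgn (e i) = 0 := by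
    have h := expect_not fun e => f e * sgn (e i)
    have h' : ∀ e : Fin n → Bool, f (fun k => !e k) * sgn (!e i) = -(f e * sgn (e i)) := by
      intro e
      simp [hf, sgn_not]
    simp only [h', Finset.expect_neg_distrib] at h
    linarith
  have hflip (e : Fin n → Bool) : ((n : ℝ) - 2) * f e ≤ ∑ i, f (flip i e) := by
    have h1 : ∑ i, ∑ k, sgn (flip i e k) • x k = ((n : ℝ) - 2) • ∑ k, sgn (e k) • x k := by
      simp only [sum_sgn_flip, Finset.sum_sub_distrib, ← Finset.smul_sum]
      simp only [Finset.sum_const, Finset.card_univ, Fintype.card_fin, sub_smul,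
        Nat.cast_smul_eq_nsmul]
    calc ((n : ℝ) - 2) * f e ≤ |(n : ℝ) - 2| * f e := by
          gcongr
          exact le_abs_self _
      _ = ‖∑ i, ∑ k, sgn (flip i e k) • x k‖ := by rw [h1, norm_smul, Real.norm_eq_abs]
      _ ≤ ∑ i, f (flip i e) := norm_sum_le _ _
  have hD : dirichlet f ≤ 𝔼 e, f e ^ 2 := by
    have h1 (i : Fin n) : 𝔼 e, (f e - f (flip i e)) ^ 2 / 4
        = 𝔼 e, (f e ^ 2 - f e * f (flip i e)) / 2 := by
      have h2 := expect_flip i fun e => f e ^ 2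
      have h3 : ∀ e, (f e - f (flip i e)) ^ 2 / 4
        = (f e ^ 2 - f e * f (flip i e)) / 2 + (f (flip i e) ^ 2 - f e ^ 2) / 4 := by
        intro e; ring
      simp only [h3, Finset.expect_add_distrib, ← Finset.expect_div, Finset.expect_sub_distrib]
      rw [h2]; ring
    simp only [dirichlet, h1]
    rw [← Finset.expect_sum_comm]
    refine Finset.expect_le_expect fun e _ => ?_
    have h4 := mul_le_mul_of_nonneg_left (hflip e) (norm_nonneg _ : 0 ≤ f e)
    rw [← Finset.sum_div, Finset.sum_sub_distrib, ← Finset.mul_sum]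
    simp only [Finset.sum_const, Finset.card_univ, Fintype.card_fin, nsmul_eq_mul]
    linarith
  have h := poincare_two f
  simp only [hodd] at h
  simp at h
  linarith

variable {𝕂 : Type*} [RCLike 𝕂]

lemma expect_sq_norm_eq : ∀ {n : ℕ} (x : Fin n → 𝕂),
    𝔼 e : Fin n → Bool, ‖∑ k, sgn (e k) • x k‖ ^ 2 = ∑ k, ‖x k‖ ^ 2
  | 0, x => by simp
  | n + 1, x => by
    rw [expect_cube_succ, ← Finset.expect_add_distrib, Finset.expect_div, Fin.sum_univ_succ,
      ← expect_sq_norm_eq fun k => x k.succ]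
    rw [← Fintype.expect_const (ι := Fin n → Bool) (‖x 0‖ ^ 2), ← Finset.expect_add_distrib]
    refine Finset.expect_congr rfl fun e _ => ?_
    have h := parallelogram_law_with_norm 𝕂 (∑ k, sgn (e k) • x k.succ) (x 0)
    simp only [Fin.sum_univ_succ, Fin.cons_zero, Fin.cons_succ, sgn, if_true, Bool.false_eq_true,
      if_false, one_smul, neg_smul] at h ⊢
    rw [add_comm (x 0), add_comm (-x 0), ← sub_eq_add_neg, h]
    ring

lemma sqrt_sum_sq_le_expect {n : ℕ} (x : Fin n → 𝕂) :
    √(∑ k, ‖x k‖ ^ 2) ≤ √2 * 𝔼 e : Fin n → Bool, ‖∑ k, sgn (e k) • x k‖ := by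
  have h0 : 0 ≤ 𝔼 e : Fin n → Bool, ‖∑ k, sgn (e k) • x k‖ :=
    Finset.expect_nonneg fun _ _ => norm_nonneg _
  rw [← Real.sqrt_sq h0, ← Real.sqrt_mul zero_le_two, ← expect_sq_norm_eq]
  exact Real.sqrt_le_sqrt (expect_sq_norm_le x)

/-- Minkowski's inequality for the expectation of a Euclidean norm. -/
lemma sqrt_sum_sq_expect_le {Ω κ : Type*} [Fintype Ω] [Fintype κ] (y : κ → Ω → ℝ) :
    √(∑ k, (𝔼 w, y k w) ^ 2) ≤ 𝔼 w, √(∑ k, y k w ^ 2) := by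
  set A := √(∑ k, (𝔼 w, y k w) ^ 2) with hA
  have hA2 : A * A = ∑ k, (𝔼 w, y k w) ^ 2 :=
    Real.mul_self_sqrt (Finset.sum_nonneg fun _ _ => sq_nonneg _)
  have h0 : 0 ≤ 𝔼 w, √(∑ k, y k w ^ 2) := Finset.expect_nonneg fun _ _ => Real.sqrt_nonneg _
  rcases (Real.sqrt_nonneg _ : 0 ≤ A).eq_or_lt with h | h
  · exact h.symm.le.trans h0
  refine le_of_mul_le_mul_left ?_ h
  calc A * A = 𝔼 w, ∑ k, (𝔼 w, y k w) * y k w := by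
        rw [hA2, Finset.expect_sum_comm]
        exact Finset.sum_congr rfl fun k _ => by rw [← Finset.mul_expect, sq]
    _ ≤ 𝔼 w, A * √(∑ k, y k w ^ 2) :=
        Finset.expect_le_expect fun w _ => Real.sum_mul_le_sqrt_mul_sqrt _ _ _
    _ = A * 𝔼 w, √(∑ k, y k w ^ 2) := by rw [Finset.mul_expect]

lemma sum_cons {n : ℕ} {α M : Type*} [Fintype α] [AddCommMonoid M] (f : (Fin (n + 1) → α) → M) :
    ∑ j, f j = ∑ k, ∑ j : Fin n → α, f (Fin.cons k j) := by
  rw [← Fintype.sum_prod_type']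
  exact (Fintype.sum_equiv (Fin.consEquiv fun _ => α) _ _ fun _ => rfl).symm

/-- The Khinchine inequality for Rademacher chaoses in `M` independent families of signs. -/
lemma sqrt_sum_sq_le_expect_chaos {n : ℕ} : ∀ {M : ℕ} (c : (Fin M → Fin n) → 𝕂),
    √(∑ j, ‖c j‖ ^ 2)
      ≤ √2 ^ M * 𝔼 e : Fin M → Fin n → Bool, ‖∑ j, (∏ l, sgn (e l (j l))) • c j‖
  | 0, c => by simp
  | M + 1, c => by
    set Y : Fin n → (Fin M → Fin n → Bool) → 𝕂 := fun k e =>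
      ∑ j : Fin M → Fin n, (∏ l, sgn (e l (j l))) • c (Fin.cons k j) with hY
    have hX (a : Fin n → Bool) (e : Fin M → Fin n → Bool) :
        ∑ j, (∏ l, sgn ((Fin.cons a e : Fin (M + 1) → Fin n → Bool) l (j l))) • c j
          = ∑ k, sgn (a k) • Y k e := by
      rw [sum_cons]
      refine Finset.sum_congr rfl fun k _ => ?_
      rw [hY, Finset.smul_sum]
      refine Finset.sum_congr rfl fun j _ => ?_
      rw [Fin.prod_univ_succ, mul_smul]
      simp
    have h2 : (0 : ℝ) ≤ √2 ^ M := by positivity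
    calc √(∑ j, ‖c j‖ ^ 2)
        = √(∑ k, √(∑ j : Fin M → Fin n, ‖c (Fin.cons k j)‖ ^ 2) ^ 2) := by
          rw [sum_cons]
          congr 1
          exact Finset.sum_congr rfl fun k _ =>
            (Real.sq_sqrt (Finset.sum_nonneg fun _ _ => sq_nonneg _)).symm
      _ ≤ √(∑ k, (√2 ^ M * 𝔼 e, ‖Y k e‖) ^ 2) := by
          gcongr with k
          exact sqrt_sum_sq_le_expect_chaos fun j => c (Fin.cons k j)
      _ = √2 ^ M * √(∑ k, (𝔼 e, ‖Y k e‖) ^ 2) := by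
          simp only [mul_pow _ (𝔼 e, _)]
          rw [← Finset.mul_sum, Real.sqrt_mul (sq_nonneg _), Real.sqrt_sq h2]
      _ ≤ √2 ^ M * 𝔼 e, √(∑ k, ‖Y k e‖ ^ 2) := by
          gcongr
          exact sqrt_sum_sq_expect_le _
      _ ≤ √2 ^ M * 𝔼 e, √2 * 𝔼 a : Fin n → Bool, ‖∑ k, sgn (a k) • Y k e‖ := by
          gcongr with e
          exact sqrt_sum_sq_le_expect _
      _ = √2 ^ (M + 1) * 𝔼 e : Fin (M + 1) → Fin n → Bool,
            ‖∑ j, (∏ l, sgn (e l (j l))) • c j‖ := by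
          rw [expect_cons, Finset.expect_comm]
          simp only [hX]
          rw [← Finset.mul_expect, pow_succ, mul_assoc]

/-- If a form with coefficients `a` is bounded by `C` on the product of unit balls of `ℓ_m`, then
its coefficients satisfy a weighted mixed `(1, 2)`-inequality with respect to each coordinate. -/
lemma sum_sqrt_fiber_le {n N m : ℕ} (a : (Fin N → Fin n) → 𝕂) {C : ℝ}
    (hC : ∀ x : Fin N → Fin n → 𝕂, (∀ l, ∑ k, ‖x l k‖ ^ m ≤ 1) →
      ‖∑ j, (∏ l, x l (j l)) * a j‖ ≤ C)
    (v : Fin N → Fin n → ℝ) (hv : ∀ l k, 0 ≤ v l k) (hv1 : ∀ l, ∑ k, v l k ^ m ≤ 1) (i : Fin N) :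
    ∑ k, √(∑ j with j i = k, ((∏ l, v l (j l)) * ‖a j‖) ^ 2) ≤ √2 ^ N * C := by
  set c : Fin n → (Fin N → Fin n) → 𝕂 := fun k j =>
    if j i = k then (∏ l, v l (j l)) • a j else 0 with hc
  have hcn (k : Fin n) : ∑ j with j i = k, ((∏ l, v l (j l)) * ‖a j‖) ^ 2 = ∑ j, ‖c k j‖ ^ 2 := by
    rw [Finset.sum_filter]
    refine Finset.sum_congr rfl fun j _ => ?_
    simp only [hc]
    split_ifs
    · rw [norm_smul, Real.norm_of_nonneg (Finset.prod_nonneg fun l _ => hv l _)]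
    · simp
  have hpt (e : Fin N → Fin n → Bool) :
      ∑ k, ‖∑ j, (∏ l, sgn (e l (j l))) • c k j‖ ≤ C := by
    choose φ hφ1 hφ using fun k =>
      RCLike.exists_norm_eq_mul_self (∑ j, (∏ l, sgn (e l (j l))) • c k j)
    have hx := hC (fun l k => (if l = i then φ k else 1) * ((sgn (e l k) * v l k : ℝ) : 𝕂)) ?_
    · refine le_trans (le_of_eq ?_) hx
      have hsum : ∑ j, (∏ l, (if l = i then φ (j l) else 1) *
          ((sgn (e l (j l)) * v l (j l) : ℝ) : 𝕂)) * a j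
          = ((∑ k, ‖∑ j, (∏ l, sgn (e l (j l))) • c k j‖ : ℝ) : 𝕂) := by
        rw [RCLike.ofReal_sum]
        simp only [hφ, Finset.mul_sum]
        rw [Finset.sum_comm]
        refine Finset.sum_congr rfl fun j _ => ?_
        simp only [hc, smul_ite, smul_zero, mul_ite, mul_zero]
        rw [Finset.sum_ite_eq Finset.univ (j i), if_pos (Finset.mem_univ _),
          Finset.prod_mul_distrib, Finset.prod_ite_eq' Finset.univ i, if_pos (Finset.mem_univ _),
          ← RCLike.ofReal_prod, Finset.prod_mul_distrib, ← mul_smul, RCLike.real_smul_eq_coe_mul,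
          mul_assoc]
      rw [hsum, RCLike.norm_ofReal, abs_of_nonneg (Finset.sum_nonneg fun _ _ => norm_nonneg _)]
    · intro l
      refine le_trans (le_of_eq (Finset.sum_congr rfl fun k _ => ?_)) (hv1 l)
      congr 1
      rw [norm_mul, RCLike.norm_ofReal, abs_mul, abs_sgn, abs_of_nonneg (hv l k), one_mul]
      split_ifs <;> simp [hφ1]
  calc ∑ k, √(∑ j with j i = k, ((∏ l, v l (j l)) * ‖a j‖) ^ 2)
      ≤ ∑ k, √2 ^ N * 𝔼 e : Fin N → Fin n → Bool, ‖∑ j, (∏ l, sgn (e l (j l))) • c k j‖ :=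
        Finset.sum_le_sum fun k _ => by
          rw [hcn]
          exact sqrt_sum_sq_le_expect_chaos _
    _ = √2 ^ N * 𝔼 e : Fin N → Fin n → Bool, ∑ k, ‖∑ j, (∏ l, sgn (e l (j l))) • c k j‖ := by
        rw [Finset.expect_sum_comm, Finset.mul_sum]
    _ ≤ √2 ^ N * C := by
        gcongr
        exact Finset.expect_le Finset.univ_nonempty fun e _ => hpt e

/-- A weighted Hilbert–Schmidt bound, obtained by testing `sum_sqrt_fiber_le` against the
marginals of the normalized weight `‖a j‖² ∏ z_l(j_l)` and using the weighted AM–GM inequality. -/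
lemma sum_sq_mul_prod_le {n N m : ℕ} (hm : m ≠ 0) (a : (Fin N → Fin n) → 𝕂) {C : ℝ}
    (hC : ∀ x : Fin N → Fin n → 𝕂, (∀ l, ∑ k, ‖x l k‖ ^ m ≤ 1) →
      ‖∑ j, (∏ l, x l (j l)) * a j‖ ≤ C)
    (z : Fin N → Fin n → ℝ) (hz : ∀ l k, 0 ≤ z l k)
    (θ : Fin N → ℝ) (hθ : ∀ l, 0 ≤ θ l) (hθ1 : ∑ l, θ l = 1)
    (H : ∀ l, ∀ u : Fin n → ℝ, (∀ k, 0 ≤ u k) → ∑ k, u k = 1 →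
      ∑ k, (√(z l k) * u k ^ (θ l / 2)) ^ m ≤ 1) :
    √(∑ j, ‖a j‖ ^ 2 * ∏ l, z l (j l)) ≤ √2 ^ N * C := by
  set b : (Fin N → Fin n) → ℝ := fun j => ‖a j‖ ^ 2 * ∏ l, z l (j l) with hb
  have hb0 (j) : 0 ≤ b j := mul_nonneg (sq_nonneg _) (Finset.prod_nonneg fun l _ => hz l _)
  set B := ∑ j, b j with hB
  have hB0 : 0 ≤ B := Finset.sum_nonneg fun j _ => hb0 j
  have hC0 : 0 ≤ C := (norm_nonneg _).trans (hC 0 fun l => by simp [hm])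
  rcases hB0.eq_or_lt with h | hBpos
  · rw [← h, Real.sqrt_zero]; positivity
  set β : (Fin N → Fin n) → ℝ := fun j => b j / B with hβ
  have hβ0 (j) : 0 ≤ β j := div_nonneg (hb0 j) hB0
  have hβ1 : ∑ j, β j = 1 := by rw [← Finset.sum_div]; exact div_self hBpos.ne'
  set u : Fin N → Fin n → ℝ := fun l k => ∑ j with j l = k, β j with hu
  have hu0 (l k) : 0 ≤ u l k := Finset.sum_nonneg fun j _ => hβ0 j
  have hu1 (l) : ∑ k, u l k = 1 := by
    rw [← hβ1]; exact Finset.sum_fiberwise Finset.univ (fun j => j l) β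
  have hβu (j l) : β j ≤ u l (j l) :=
    Finset.single_le_sum (f := β) (fun j _ => hβ0 j) (by simp)
  set P : (Fin N → Fin n) → ℝ := fun j => ∏ l, u l (j l) ^ (θ l / 2) with hP
  have hP0 (j) : 0 ≤ P j := Finset.prod_nonneg fun l _ => Real.rpow_nonneg (hu0 _ _) _
  have key (i : Fin N) : √B * ∑ j, β j * P j * (√(u i (j i)))⁻¹ ≤ √2 ^ N * C := by
    refine le_trans ?_ (sum_sqrt_fiber_le a hC (fun l k => √(z l k) * u l k ^ (θ l / 2))
      (fun l k => mul_nonneg (Real.sqrt_nonneg _) (Real.rpow_nonneg (hu0 _ _) _))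
      (fun l => H l (u l) (hu0 l) (hu1 l)) i)
    rw [← Finset.sum_fiberwise Finset.univ (fun j => j i), Finset.mul_sum]
    refine Finset.sum_le_sum fun k _ => ?_
    have h1 : ∑ j with j i = k, ((∏ l, (√(z l (j l)) * u l (j l) ^ (θ l / 2))) * ‖a j‖) ^ 2
        = B * ∑ j with j i = k, β j * P j ^ 2 := by
      rw [Finset.mul_sum]
      refine Finset.sum_congr rfl fun j _ => ?_
      have h2 : (∏ l, √(z l (j l))) ^ 2 = ∏ l, z l (j l) := by
        rw [← Finset.prod_pow]
        exact Finset.prod_congr rfl fun l _ => Real.sq_sqrt (hz l _)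
      rw [Finset.prod_mul_distrib, mul_pow, mul_pow, h2]
      simp only [hβ, hb, hP]
      field_simp
    have h3 : ∑ j with j i = k, β j * P j * (√(u i (j i)))⁻¹
        = (∑ j with j i = k, √(β j) * (√(β j) * P j)) * (√(u i k))⁻¹ := by
      rw [Finset.sum_mul]
      refine Finset.sum_congr rfl fun j hj => ?_
      rw [(Finset.mem_filter.1 hj).2, ← mul_assoc, Real.mul_self_sqrt (hβ0 j)]
    have h4 := Real.sum_mul_le_sqrt_mul_sqrt {j | j i = k} (fun j : Fin N → Fin n => √(β j))
      (fun j => √(β j) * P j)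
    simp only [mul_pow, Real.sq_sqrt (hβ0 _)] at h4
    rw [h1, h3, Real.sqrt_mul hB0]
    gcongr
    refine (mul_le_mul_of_nonneg_right h4 (by positivity)).trans ?_
    rcases (Real.sqrt_nonneg (u i k)).eq_or_lt with h0 | h0
    · rw [← h0]
      simp
    · change √(u i k) * _ * _ ≤ _
      rw [mul_comm (√(u i k)), mul_assoc, mul_inv_cancel₀ h0.ne', mul_one]
  have hpt (j) : β j ≤ β j * P j * ∑ i, θ i * (√(u i (j i)))⁻¹ := by
    rcases (hβ0 j).eq_or_lt with h | h
    · rw [← h]; simp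
    · have hup (l) : 0 < u l (j l) := h.trans_le (hβu j l)
      have hamgm := Real.geom_mean_le_arith_mean_weighted Finset.univ θ
        (fun i => (√(u i (j i)))⁻¹) (fun i _ => hθ i) hθ1 (fun i _ => by positivity)
      have h1 : P j * ∏ i, (√(u i (j i)))⁻¹ ^ θ i = 1 := by
        rw [hP, ← Finset.prod_mul_distrib]
        refine Finset.prod_eq_one fun l _ => ?_
        rw [Real.inv_rpow (Real.sqrt_nonneg _), Real.sqrt_eq_rpow, ← Real.rpow_mul (hup l).le,
          one_div, inv_mul_eq_div, mul_inv_cancel₀ (Real.rpow_pos_of_pos (hup l) _).ne']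
      rw [mul_assoc]
      refine le_mul_of_one_le_right (hβ0 j) ?_
      rw [← h1]
      gcongr
      exact hP0 j
  calc √B = √B * ∑ j, β j := by rw [hβ1, mul_one]
    _ ≤ √B * ∑ j, β j * P j * ∑ i, θ i * (√(u i (j i)))⁻¹ := by
        gcongr with j; exact hpt j
    _ = ∑ i, θ i * (√B * ∑ j, β j * P j * (√(u i (j i)))⁻¹) := by
        simp only [Finset.mul_sum]
        rw [Finset.sum_comm]
        refine Finset.sum_congr rfl fun i _ => Finset.sum_congr rfl fun j _ => ?_
        ring
    _ ≤ ∑ i, θ i * (√2 ^ N * C) := by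
        exact Finset.sum_le_sum fun i _ => mul_le_mul_of_nonneg_left (key i) (hθ i)
    _ = √2 ^ N * C := by rw [← Finset.sum_mul, hθ1, one_mul]

lemma mixedNorm_nonneg {n : ℕ} : ∀ {m : ℕ} (s : Fin m → ℝ) (f : (Fin m → Fin n) → ℝ),
    (∀ j, 0 ≤ f j) → 0 ≤ mixedNorm n m s f
  | 0, _, _, hf => hf _
  | m + 1, _, _, hf => by
    rw [mixedNorm]
    exact Real.rpow_nonneg (Finset.sum_nonneg fun k _ =>
      Real.rpow_nonneg (mixedNorm_nonneg _ _ fun j => hf _) _) _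

lemma rpow_div_rpow_pow_mul_sq {r S : ℝ} (hr : 0 ≤ r) (hS : 0 ≤ S) {m c N : ℕ} (hc : 0 < c)
    (hcm : c + (N + 1) = m) :
    ((r ^ (2 * (m : ℝ) / c) / S) ^ (1 / (m : ℝ))) ^ (N + 1) * r ^ 2
      = r ^ (2 * (m : ℝ) / c) / S ^ ((N + 1 : ℝ) / m) := by
  have hcR : (0 : ℝ) < c := by exact_mod_cast hc
  have hmR : (0 : ℝ) < m := by exact_mod_cast (by omega : 0 < m)
  have hm' : (m : ℝ) = c + (N + 1) := by rw [← hcm]; push_cast; ring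
  rcases hr.eq_or_lt with rfl | h
  · rw [Real.zero_rpow (by positivity)]
    simp
  · rw [← Real.rpow_mul_natCast (div_nonneg (Real.rpow_nonneg hr _) hS), ← Real.rpow_natCast r,
      Real.div_rpow (Real.rpow_nonneg hr _) hS, ← Real.rpow_mul hr, div_mul_eq_mul_div,
      ← Real.rpow_add h]
    congr 2
    · push_cast
      field_simp
      rw [hm']
      ring
    · push_cast
      ring

/-- The mixed norm with exponents `2m/c, 2m/(c+1), …, 2m/m` is dominated by a weighted `ℓ_2`-norm
whose weights are products of functions in the unit ball of `ℓ_m`. -/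
lemma exists_weights_mixedNorm_sq_le {n : ℕ} (m : ℕ) : ∀ (N c : ℕ), 0 < c → c + N = m →
    ∀ f : (Fin (N + 1) → Fin n) → ℝ, (∀ j, 0 ≤ f j) →
    ∃ z : Fin N → Fin n → ℝ, (∀ l k, 0 ≤ z l k) ∧ (∀ l, ∑ k, z l k ^ m ≤ 1) ∧
      mixedNorm n (N + 1) (fun i => 2 * (m : ℝ) / ((i : ℕ) + c)) f ^ 2
        ≤ ∑ j, f j ^ 2 * ∏ l, z l (j l.castSucc)
  | 0, c, hc, hcm, f, hf => by
    refine ⟨fun l => l.elim0, fun l => l.elim0, fun l => l.elim0, le_of_eq ?_⟩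
    obtain rfl : c = m := by simpa using hcm
    have hc' : (c : ℝ) ≠ 0 := by positivity
    have h2 : 2 * (c : ℝ) / (((0 : Fin 1) : ℕ) + c) = 2 := by simp; field_simp
    simp only [mixedNorm]
    rw [h2, sum_cons, ← Real.sqrt_eq_rpow, Real.sq_sqrt
      (Finset.sum_nonneg fun k _ => Real.rpow_nonneg (hf _) _)]
    refine Finset.sum_congr rfl fun k _ => ?_
    simp only [Finset.univ_eq_empty, Finset.prod_empty, mul_one, Real.rpow_two]
    rw [Fintype.sum_unique]
    congr 4
  | N + 1, c, hc, hcm, f, hf => by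
    have hm : 0 < m := by omega
    choose Z hZ0 hZ1 hZ using fun k : Fin n => exists_weights_mixedNorm_sq_le m N (c + 1)
      (by omega) (by omega) (fun j => f (Fin.cons k j)) (fun j => hf _)
    set ρ : Fin n → ℝ := fun k => mixedNorm n (N + 1)
      (fun i : Fin (N + 1) => 2 * (m : ℝ) / ((i : ℕ) + (c + 1 : ℕ)))
      (fun j => f (Fin.cons k j)) with hρ
    have hρ0 (k) : 0 ≤ ρ k := mixedNorm_nonneg _ _ fun j => hf _
    set s : ℝ := 2 * (m : ℝ) / c with hs
    have hcR : (0 : ℝ) < c := by exact_mod_cast hc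
    have hmR : (0 : ℝ) < m := by exact_mod_cast hm
    have hs0 : 0 < s := by positivity
    set S := ∑ k, ρ k ^ s with hS
    have hS0 : 0 ≤ S := Finset.sum_nonneg fun k _ => Real.rpow_nonneg (hρ0 k) _
    have hmix : mixedNorm n (N + 1 + 1) (fun i => 2 * (m : ℝ) / ((i : ℕ) + c)) f
        = S ^ (1 / s) := by
      rw [mixedNorm]
      have e1 : 2 * (m : ℝ) / (((0 : Fin (N + 2)) : ℕ) + c) = s := by simp [hs]
      have e2 : (fun i : Fin (N + 1) => 2 * (m : ℝ) / (((i.succ : Fin (N + 2)) : ℕ) + c))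
          = fun i : Fin (N + 1) => 2 * (m : ℝ) / ((i : ℕ) + (c + 1 : ℕ)) := by
        funext i; push_cast [Fin.val_succ]; ring
      rw [e1, e2]
    rw [hmix]
    rcases hS0.eq_or_lt with h | hSpos
    · refine ⟨fun _ _ => 0, fun _ _ => le_rfl, fun _ => by simp [hm.ne'], ?_⟩
      rw [← h, Real.zero_rpow (by positivity)]
      simp only [ne_eq, OfNat.ofNat_ne_zero, not_false_eq_true, zero_pow]
      exact Finset.sum_nonneg fun j _ => mul_nonneg (sq_nonneg _)
        (Finset.prod_nonneg fun _ _ => le_rfl)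
    set μ : Fin n → ℝ := fun k => ρ k ^ s / S with hμ
    have hμ0 (k) : 0 ≤ μ k := div_nonneg (Real.rpow_nonneg (hρ0 k) _) hS0
    have hμ1 : ∑ k, μ k = 1 := by rw [← Finset.sum_div]; exact div_self hSpos.ne'
    set t : Fin n → ℝ := fun k => μ k ^ (1 / (m : ℝ)) with ht
    have ht0 (k) : 0 ≤ t k := Real.rpow_nonneg (hμ0 k) _
    have htm (k) : t k ^ m = μ k := by
      rw [ht]; simp only [one_div]; exact Real.rpow_inv_natCast_pow (hμ0 k) hm.ne'
    set W : Fin N → Fin n → ℝ := fun l k' => (∑ k, μ k * Z k l k' ^ m) ^ (1 / (m : ℝ)) with hW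
    have hWb (l k') : 0 ≤ ∑ k, μ k * Z k l k' ^ m :=
      Finset.sum_nonneg fun k _ => mul_nonneg (hμ0 k) (pow_nonneg (hZ0 k l k') _)
    have hW0 (l k') : 0 ≤ W l k' := Real.rpow_nonneg (hWb l k') _
    have hWm (l k') : W l k' ^ m = ∑ k, μ k * Z k l k' ^ m := by
      rw [hW]; simp only [one_div]; exact Real.rpow_inv_natCast_pow (hWb l k') hm.ne'
    have hWge (k l k') : t k * Z k l k' ≤ W l k' := by
      refine le_of_pow_le_pow_left₀ hm.ne' (hW0 l k') ?_
      rw [mul_pow, htm, hWm]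
      exact Finset.single_le_sum (f := fun k => μ k * Z k l k' ^ m)
        (fun k _ => mul_nonneg (hμ0 k) (pow_nonneg (hZ0 k l k') _)) (Finset.mem_univ k)
    refine ⟨Fin.cons t W, fun l => ?_, fun l => ?_, ?_⟩
    · refine Fin.cases ?_ (fun l => ?_) l
      · exact ht0
      · exact hW0 l
    · refine Fin.cases ?_ (fun l => ?_) l
      · simp [htm, hμ1]
      · simp only [Fin.cons_succ, hWm]
        rw [Finset.sum_comm]
        simp only [← Finset.mul_sum]
        calc ∑ k, μ k * ∑ k', Z k l k' ^ m ≤ ∑ k, μ k * 1 := by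
              gcongr with k
              · exact hμ0 k
              · exact hZ1 k l
          _ = 1 := by simpa using hμ1
    have hterm (k) : t k ^ (N + 1) * ρ k ^ 2 = ρ k ^ s / S ^ ((N + 1 : ℝ) / m) :=
      rpow_div_rpow_pow_mul_sq (hρ0 k) hS0 hc hcm
    have hprod (k) (j : Fin (N + 1) → Fin n) :
        t k ^ (N + 1) * ∏ l, Z k l (j l.castSucc)
          ≤ ∏ l, (Fin.cons t W : Fin (N + 1) → Fin n → ℝ) l
            ((Fin.cons k j : Fin (N + 2) → Fin n) l.castSucc) := by
      rw [Fin.prod_univ_succ]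
      simp only [Fin.cons_zero, Fin.castSucc_zero, Fin.cons_succ, ← Fin.succ_castSucc]
      rw [pow_succ', mul_assoc]
      refine mul_le_mul_of_nonneg_left ?_ (ht0 k)
      calc t k ^ N * ∏ l, Z k l (j l.castSucc) = ∏ l, (t k * Z k l (j l.castSucc)) := by
            rw [Finset.prod_mul_distrib]; simp
        _ ≤ _ := Finset.prod_le_prod (fun l _ => mul_nonneg (ht0 k) (hZ0 _ _ _))
            fun l _ => hWge _ _ _
    calc (S ^ (1 / s)) ^ 2 = S / S ^ ((N + 1 : ℝ) / m) := by
          have hm' : (m : ℝ) = c + (N + 1) := by rw [← hcm]; push_cast; ring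
          rw [← Real.rpow_natCast, ← Real.rpow_mul hS0]
          nth_rewrite 2 [← Real.rpow_one S]
          rw [← Real.rpow_sub hSpos]
          congr 1
          rw [hs]; push_cast; field_simp
          rw [hm']; ring
      _ = ∑ k, t k ^ (N + 1) * ρ k ^ 2 := by
          simp only [hterm]; rw [← Finset.sum_div]
      _ ≤ ∑ k, t k ^ (N + 1) * ∑ j : Fin (N + 1) → Fin n,
            f (Fin.cons k j) ^ 2 * ∏ l, Z k l (j l.castSucc) := by
          gcongr with k
          · exact pow_nonneg (ht0 k) _
          · exact hZ k
      _ ≤ _ := by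
          rw [sum_cons]
          refine Finset.sum_le_sum fun k _ => ?_
          rw [Finset.mul_sum]
          refine Finset.sum_le_sum fun j _ => ?_
          rw [mul_left_comm]
          exact mul_le_mul_of_nonneg_left (hprod k j) (sq_nonneg _)

lemma norm_sum_prod_mul_le {n N m : ℕ} (hm : m ≠ 0) [Fact ((1 : ℝ≥0∞) ≤ (m : ℝ≥0∞))]
    (T : ContinuousMultilinearMap 𝕂
      (fun _ : Fin (N + 1) => PiLp (m : ℝ≥0∞) (fun _ : Fin n => 𝕂)) 𝕂) (j1 : Fin n)
    (x : Fin N → Fin n → 𝕂) (hx : ∀ l, ∑ k, ‖x l k‖ ^ m ≤ 1) :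
    ‖∑ j : Fin N → Fin n, (∏ l, x l (j l)) *
      T (Fin.cons (WithLp.toLp m (Pi.single j1 1)) fun l => WithLp.toLp m (Pi.single (j l) 1))‖
      ≤ ‖T‖ := by
  have hnorm (y : Fin n → 𝕂) (hy : ∑ k, ‖y k‖ ^ m ≤ 1) :
      ‖(WithLp.toLp m y : PiLp (m : ℝ≥0∞) (fun _ : Fin n => 𝕂))‖ ≤ 1 := by
    have h0 : 0 < (m : ℝ≥0∞).toReal := by simpa using Nat.pos_of_ne_zero hm
    rw [PiLp.norm_eq_sum h0]
    simp only [ENNReal.toReal_natCast, Real.rpow_natCast]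
    exact Real.rpow_le_one (Finset.sum_nonneg fun _ _ => by positivity) hy (by positivity)
  have hexp : ∑ j : Fin N → Fin n, (∏ l, x l (j l)) *
      T (Fin.cons (WithLp.toLp m (Pi.single j1 1)) fun l => WithLp.toLp m (Pi.single (j l) 1))
      = T (Fin.cons (WithLp.toLp m (Pi.single j1 1)) fun l => WithLp.toLp m (x l)) := by
    have hdec (l : Fin N) : (WithLp.toLp m (x l) : PiLp (m : ℝ≥0∞) (fun _ : Fin n => 𝕂))
        = ∑ k, x l k • WithLp.toLp m (Pi.single k 1) := by
      ext i
      simp [Pi.single_apply]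
    have h := (T.curryLeft (WithLp.toLp m (Pi.single j1 1))).map_sum
      fun l k => x l k • (WithLp.toLp m (Pi.single k 1) : PiLp (m : ℝ≥0∞) (fun _ : Fin n => 𝕂))
    simp only [ContinuousMultilinearMap.map_smul_univ, ← hdec,
      ContinuousMultilinearMap.curryLeft_apply, smul_eq_mul] at h
    exact h.symm
  rw [hexp]
  refine T.unit_le_opNorm ((pi_norm_le_iff_of_nonneg zero_le_one).2 fun i => ?_)
  refine Fin.cases ?_ (fun l => ?_) i
  · refine hnorm _ ?_
    rw [Finset.sum_eq_single j1 (fun k _ hk => by simp [hk, hm]) (by simp)]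
    simp
  · exact hnorm _ (hx l)

lemma mixedNorm_norm_le {n N : ℕ} (a : (Fin (N + 1) → Fin n) → 𝕂) {C : ℝ}
    (hC : ∀ x : Fin (N + 1) → Fin n → 𝕂, (∀ l, ∑ k, ‖x l k‖ ^ (N + 2) ≤ 1) →
      ‖∑ j, (∏ l, x l (j l)) * a j‖ ≤ C) :
    mixedNorm n (N + 1) (fun i => 2 * ((N + 2 : ℕ) : ℝ) / ((i : ℕ) + 2)) (fun j => ‖a j‖)
      ≤ √2 ^ (N + 1) * C := by
  obtain ⟨z, hz0, hz1, hz⟩ := exists_weights_mixedNorm_sq_le (N + 2) N 2 two_pos (by omega)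
    (fun j => ‖a j‖) fun j => norm_nonneg _
  have hm : ((N + 2 : ℕ) : ℝ) ≠ 0 := by positivity
  have hmain := sum_sq_mul_prod_le (m := N + 2) (by omega) a hC
    (Fin.snoc z fun _ => 1 : Fin (N + 1) → Fin n → ℝ)
    (fun l => by
      refine Fin.lastCases ?_ (fun l => ?_) l
      · simp
      · simpa using hz0 l)
    (Fin.snoc (fun _ => 1 / ((N + 2 : ℕ) : ℝ)) (2 / ((N + 2 : ℕ) : ℝ)) : Fin (N + 1) → ℝ)
    (fun l => by
      refine Fin.lastCases ?_ (fun l => ?_) l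
      · simp only [Fin.snoc_last]; positivity
      · simp only [Fin.snoc_castSucc]; positivity)
    (by
      rw [Fin.sum_univ_castSucc]
      simp only [Fin.snoc_last, Fin.snoc_castSucc, Finset.sum_const, Finset.card_univ,
        Fintype.card_fin, nsmul_eq_mul]
      field_simp
      push_cast
      ring)
    (fun l u hu0 hu1 => by
      refine Fin.lastCases ?_ (fun l => ?_) l
      · simp only [Fin.snoc_last, Real.sqrt_one, one_mul]
        refine le_of_eq ((Finset.sum_congr rfl fun k _ => ?_).trans hu1)
        rw [← Real.rpow_mul_natCast (hu0 k)]
        convert Real.rpow_one (u k) using 2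
        field_simp
      · simp only [Fin.snoc_castSucc]
        have h (k : Fin n) : (√(z l k) * u k ^ (1 / ((N + 2 : ℕ) : ℝ) / 2)) ^ (N + 2)
            = √(z l k ^ (N + 2)) * √(u k) := by
          rw [mul_pow, ← Real.rpow_mul_natCast (hu0 k), Real.sqrt_eq_rpow (u k)]
          congr 1
          · rw [eq_comm, Real.sqrt_eq_iff_mul_self_eq (pow_nonneg (hz0 l k) _) (by positivity),
              ← mul_pow, Real.mul_self_sqrt (hz0 l k)]
          · congr 1
            field_simp
        simp only [h]
        calc ∑ k, √(z l k ^ (N + 2)) * √(u k)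
            ≤ √(∑ k, z l k ^ (N + 2)) * √(∑ k, u k) :=
              Real.sum_sqrt_mul_sqrt_le _ (fun k => pow_nonneg (hz0 l k) _) hu0
          _ ≤ 1 * 1 := by
              gcongr
              · exact Real.sqrt_le_one.2 (hz1 l)
              · exact Real.sqrt_le_one.2 hu1.le
          _ = 1 := one_mul 1)
  refine le_trans (Real.le_sqrt_of_sq_le ?_) hmain
  simp only [Fin.prod_univ_castSucc, Fin.snoc_last, Fin.snoc_castSucc, mul_one]
  exact_mod_cast hz

end CriticalHL

/-- **Corollary of the extended inclusion theorem.**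
For `m ≥ 2`, with `s_k = 2m/k` for `k = 2,…,m`, every `m`-linear form
`T : ℓ_m^n × ⋯ × ℓ_m^n → 𝕂` satisfies
`sup_{j_1} ( Σ_{j_2} ( ⋯ ( Σ_{j_m} |T(e_{j_1},…,e_{j_m})|^{s_m} )^{s_{m−1}/s_m} ⋯ )^{s_2/s_3} )^{1/s_2}
  ≤ 2^{(m−1)/2} ‖T‖`. -/
theorem critical_hardy_littlewood_weak (𝕂 : Type*) [RCLike 𝕂] (m : ℕ) (hm : 2 ≤ m)
    (n : ℕ) (hn : 0 < n) :
    haveI : Fact ((1 : ℝ≥0∞) ≤ (m : ℝ≥0∞)) := ⟨by exact_mod_cast (by omega : 1 ≤ m)⟩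
    ∀ T : ContinuousMultilinearMap 𝕂
        (fun _ : Fin m => PiLp (m : ℝ≥0∞) (fun _ : Fin n => 𝕂)) 𝕂,
      ⨆ j1 : Fin n,
        mixedNorm n (m - 1)
          (fun i => (2 * (m : ℝ)) / ((i : ℕ) + 2))
          (fun js => ‖T (fun i : Fin m =>
            (WithLp.equiv (m : ℝ≥0∞) (Fin n → 𝕂)).symm
              (Pi.single (if (i : ℕ) = 0 then j1
                else js ⟨(i : ℕ) - 1, by have := i.isLt; omega⟩) 1))‖)
        ≤ (2 : ℝ) ^ (((m : ℝ) - 1) / 2) * ‖T‖ := by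
  intro T
  obtain ⟨N, rfl⟩ : ∃ N, m = N + 2 := ⟨m - 2, by omega⟩
  have : Fact ((1 : ℝ≥0∞) ≤ ((N + 2 : ℕ) : ℝ≥0∞)) := ⟨by exact_mod_cast (by omega : 1 ≤ N + 2)⟩
  have : Nonempty (Fin n) := ⟨⟨0, hn⟩⟩
  refine ciSup_le fun j1 => ?_
  have h := CriticalHL.mixedNorm_norm_le _
    (CriticalHL.norm_sum_prod_mul_le (N := N + 1) (by omega) T j1)
  have hc : (2 : ℝ) ^ ((((N + 2 : ℕ) : ℝ) - 1) / 2) = √2 ^ (N + 1) := by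
    rw [Real.sqrt_eq_rpow, ← Real.rpow_mul_natCast zero_le_two]
    congr 1
    push_cast
    ring
  rw [hc]
  refine le_trans (le_of_eq ?_) h
  refine congrArg _ (funext fun js => congrArg (fun x => ‖T x‖) (funext fun i => ?_))
  refine Fin.cases ?_ (fun l => ?_) i
  · simp
  · simp
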